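/- Let G be a finite semiprimitive permutation group with point stabiliser H and regular normal nilpotent subgroup K. If p is a prime with O_p(H) ≠ 1, then p does not divide |K|. -/

import Mathlib

def Subgroup.IsTransitiveOn {G : Type*} [Group G] (Ω : Type*) [MulAction G Ω]
    (N : Subgroup G) : Prop :=
  ∀ a b : Ω, ∃ n ∈ N, n • a = b

def Subgroup.IsSemiregularOn {G : Type*} [Group G] (Ω : Type*) [MulAction G Ω]
    (N : Subgroup G) : Prop :=
  ∀ n ∈ N, ∀ a : Ω, n • a = a → n = 1

def IsSemiprimitiveAction (G Ω : Type*) [Group G] [MulAction G Ω] : Prop :=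
  MulAction.IsPretransitive G Ω ∧
    ∀ N : Subgroup G, N.Normal → N.IsTransitiveOn Ω ∨ N.IsSemiregularOn Ω

/-- A finite nilpotent group of order divisible by `p` has a proper characteristic subgroup
whose quotient is a `p`-group. -/
theorem Group.IsNilpotent.exists_characteristic_ne_top_pow_mem {K : Type*} [Group K] [Finite K]
    [Group.IsNilpotent K] {p : ℕ} (hp : p.Prime) (hdvd : p ∣ Nat.card K) :
    ∃ Q : Subgroup K, Q.Characteristic ∧ Q ≠ ⊤ ∧ ∀ k : K, ∃ n : ℕ, k ^ p ^ n ∈ Q := by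
  have : Fact p.Prime := ⟨hp⟩
  refine ⟨Subgroup.closure {x | ¬ p ∣ orderOf x}, ?_, ?_, ?_⟩
  · rw [Subgroup.characteristic_iff_map_le]
    intro φ
    rw [MonoidHom.map_closure, Subgroup.closure_le]
    rintro _ ⟨x, hx, rfl⟩
    apply Subgroup.subset_closure
    simpa [MulEquiv.orderOf_eq] using hx
  · intro htop
    let e : (∀ q : (Nat.card K).primeFactors, ∀ P : Sylow q K, P) ≃* K :=
      Sylow.directProductOfNormal inferInstance
    let q : (Nat.card K).primeFactors :=
      ⟨p, Nat.mem_primeFactors.2 ⟨hp, hdvd, Nat.card_pos.ne'⟩⟩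
    let S : Sylow p K := default
    let f : K →* S :=
      (Pi.evalMonoidHom (fun P : Sylow p K => P) S).comp
        ((Pi.evalMonoidHom (fun q : (Nat.card K).primeFactors => ∀ P : Sylow q K, P) q).comp
          e.symm.toMonoidHom)
    have hf : Function.Surjective f :=
      (Function.surjective_eval S).comp ((Function.surjective_eval q).comp e.symm.surjective)
    have hker : f.ker = ⊤ := by
      rw [eq_top_iff, ← htop, Subgroup.closure_le]
      intro x hx
      by_contra hfx
      exact hx ((S.isPGroup'.dvd_orderOf hfx).trans (orderOf_map_dvd f x))
    refine S.ne_bot_of_dvd_card hdvd ((Subgroup.eq_bot_iff_forall _).2 fun s hs => ?_)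
    obtain ⟨k, hk⟩ := hf ⟨s, hs⟩
    have hk1 : f k = 1 := by
      rw [← MonoidHom.mem_ker, hker]
      trivial
    simpa [hk1] using congrArg Subtype.val hk.symm
  · intro k
    obtain ⟨n, m, hm, hk⟩ := Nat.exists_eq_pow_mul_and_not_dvd (orderOf_pos k).ne' p hp.ne_one
    refine ⟨n, Subgroup.subset_closure ?_⟩
    rwa [Set.mem_ofPred_eq, orderOf_pow_of_dvd (pow_ne_zero _ hp.ne_zero) (hk ▸ dvd_mul_right _ _),
      hk, Nat.mul_div_cancel_left _ (pow_pos hp.pos _)]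

/-- A proper subgroup of a finite nilpotent group lies in a proper normal subgroup. -/
theorem Group.IsNilpotent.exists_normal_ne_top_ge {G : Type*} [Group G] [Finite G]
    [Group.IsNilpotent G] {P : Subgroup G} (hP : P ≠ ⊤) :
    ∃ M : Subgroup G, M.Normal ∧ M ≠ ⊤ ∧ P ≤ M := by
  obtain ⟨M, hM, hPM⟩ := (eq_top_or_exists_le_coatom P).resolve_left hP
  exact ⟨M, Subgroup.NormalizerCondition.normal_of_coatom M Group.normalizerCondition_of_isNilpotent hM,
    hM.1, hPM⟩

/-- Lemma 2.6: if `G` is a finite semiprimitive group with point stabiliser `H` and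
regular normal nilpotent subgroup `K`, and `O_p(H) ≠ 1` (i.e. `H` has a nontrivial
normal `p`-subgroup) for a prime `p`, then `p` does not divide `|K|`. -/
theorem stmt6 {G Ω : Type*} [Group G] [Finite G] [MulAction G Ω] [FaithfulSMul G Ω]
    (hsp : IsSemiprimitiveAction G Ω) (K : Subgroup G) [K.Normal]
    (hnilp : Group.IsNilpotent K) (htrans : K.IsTransitiveOn Ω) (hsreg : K.IsSemiregularOn Ω)
    (ω : Ω) (p : ℕ) (hp : p.Prime)
    (hOp : ∃ P : Subgroup (MulAction.stabilizer G ω), P ≠ ⊥ ∧ P.Normal ∧ IsPGroup p P) :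
    ¬ p ∣ Nat.card K := by
  intro hdvd
  have : Fact p.Prime := ⟨hp⟩
  obtain ⟨P₀, hP₀, hP₀n, hP₀p⟩ := hOp
  obtain ⟨Q₀, hQ₀c, hQ₀, hQ₀p⟩ :=
    Group.IsNilpotent.exists_characteristic_ne_top_pow_mem hp hdvd
  let P : Subgroup G := P₀.map (MulAction.stabilizer G ω).subtype
  let Q : Subgroup G := Q₀.map K.subtype
  have hQK : Q ≤ K := Subgroup.map_subtype_le Q₀
  have hPfix : ∀ x ∈ P, x • ω = ω := fun x hx =>
    Subgroup.map_subtype_le P₀ hx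
  have hPconj : ∀ h : G, h • ω = ω → ∀ x ∈ P, h * x * h⁻¹ ∈ P := by
    rintro h hh _ ⟨x, hx, rfl⟩
    exact ⟨_, hP₀n.conj_mem x hx ⟨h, hh⟩, rfl⟩
  let π : G →* G ⧸ Q := QuotientGroup.mk' Q
  have hπ : ∀ {a b : G}, π a = π b ↔ a⁻¹ * b ∈ Q := QuotientGroup.eq
  have hKn : (K.map π).Normal := Subgroup.Normal.map ‹_› π (QuotientGroup.mk'_surjective Q)
  have hKp : IsPGroup p (K.map π) := by
    rw [isPGroup_iff_pow_pow_eq_one]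
    rintro ⟨_, k, hk, rfl⟩
    obtain ⟨n, hn⟩ := hQ₀p ⟨k, hk⟩
    refine ⟨n, Subtype.ext ?_⟩
    change π k ^ p ^ n = 1
    rw [← map_pow]
    exact (QuotientGroup.eq_one_iff _).2 ⟨_, hn, rfl⟩
  have hPp : IsPGroup p (P.map π) := (hP₀p.map _).map π
  let L : Subgroup (G ⧸ Q) := K.map π ⊔ P.map π
  have hLp : IsPGroup p L := IsPGroup.to_sup_of_normal_left hKp hPp
  have hLnilp : Group.IsNilpotent L := hLp.isNilpotent
  have hPL : (P.map π).subgroupOf L ≠ ⊤ := by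
    rw [Ne, Subgroup.subgroupOf_eq_top]
    intro hle
    apply hQ₀
    rw [eq_top_iff]
    rintro ⟨k, hk⟩ -
    obtain ⟨x, hx, hxk⟩ := hle (Subgroup.mem_sup_left (Subgroup.mem_map_of_mem π hk))
    have hxK : x ∈ K := by
      have := K.mul_mem hk (hQK (hπ.1 hxk.symm))
      rwa [mul_inv_cancel_left] at this
    rw [hsreg x hxK ω (hPfix x hx), hπ, inv_one, one_mul] at hxk
    obtain ⟨k', hk', rfl⟩ := hxk
    exact hk'
  obtain ⟨M₀, hM₀n, hM₀, hPM₀⟩ := Group.IsNilpotent.exists_normal_ne_top_ge hPL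
  let M : Subgroup G := (M₀.map L.subtype).comap π
  have hPM : P ≤ M := fun x hx =>
    ⟨⟨π x, Subgroup.mem_sup_right (Subgroup.mem_map_of_mem π hx)⟩,
      hPM₀ (Subgroup.mem_map_of_mem π hx), rfl⟩
  have hKM_conj : ∀ k ∈ K, ∀ x ∈ M, k * x * k⁻¹ ∈ M := by
    rintro k hk x ⟨l, hl, hlx⟩
    refine ⟨_, hM₀n.conj_mem l hl
      ⟨π k, Subgroup.mem_sup_left (Subgroup.mem_map_of_mem π hk)⟩, ?_⟩
    change π k * (l : G ⧸ Q) * (π k)⁻¹ = π (k * x * k⁻¹)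
    rw [map_mul, map_mul, map_inv, ← hlx]
    rfl
  have hNM : Subgroup.normalClosure (P : Set G) ≤ M := by
    rw [Subgroup.normalClosure, Subgroup.closure_le]
    intro y hy
    rw [SetLike.mem_coe]
    obtain ⟨x, hx, hxy⟩ := Group.mem_conjugatesOfSet_iff.1 hy
    obtain ⟨g, rfl⟩ := isConj_iff.1 hxy
    obtain ⟨k, hk, hkg⟩ := htrans ω (g • ω)
    have := hKM_conj k hk _ (hPM (hPconj (k⁻¹ * g) (by rw [mul_smul, ← hkg, inv_smul_smul]) x hx))
    convert this using 1
    group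
  have hKM : K ≤ M := by
    rcases hsp.2 _ (Subgroup.normalClosure_normal (s := (P : Set G))) with ht | hs
    · intro k hk
      obtain ⟨n, hn, hnk⟩ := ht ω (k • ω)
      have hnM := hNM hn
      obtain ⟨l, -, hl⟩ := hnM
      have hnL : π n ∈ L := hl ▸ l.2
      obtain ⟨_, ⟨k', hk', rfl⟩, _, ⟨x, hx, rfl⟩, hkx⟩ := Subgroup.mem_sup_of_normal_left.1 hnL
      have hnx : n * x⁻¹ ∈ K := by
        rw [← map_mul, hπ] at hkx
        have := K.mul_mem hk' (‹K.Normal›.conj_mem _ (hQK hkx) x)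
        convert this using 1
        group
      have hfix : (k⁻¹ * (n * x⁻¹)) • ω = ω := by
        rw [mul_smul, mul_smul, inv_smul_eq_iff.2 (hPfix x hx).symm, hnk, inv_smul_smul]
      have hkn := hsreg _ (K.mul_mem (K.inv_mem hk) hnx) ω hfix
      rw [inv_mul_eq_one.1 hkn]
      exact M.mul_mem (hNM hn) (M.inv_mem (hPM hx))
    · refine absurd ((Subgroup.eq_bot_iff_forall _).2 fun x hx => Subtype.ext ?_) hP₀
      exact hs x (Subgroup.subset_normalClosure ⟨x, hx, rfl⟩) ω x.2
  apply hM₀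
  rw [eq_top_iff]
  rintro ⟨l, hl⟩ -
  obtain ⟨m, hm, hml⟩ :=
    sup_le (Subgroup.map_le_iff_le_comap.2 hKM) (Subgroup.map_le_iff_le_comap.2 hPM) hl
  rwa [← show m = ⟨l, hl⟩ from Subtype.ext hml]
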